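/- The duplicability factor of substitution is bounded: if Γ,x ⊩ P (or Γ,!x ⊩ P or Γ,§x ⊩ P) is a well-formed SHOπ judgement and V is a well-formed closed value (⊩ V in the empty context), then D(P[V/x]) ≤ max{D(P), D(V)}; similarly, for a well-formed value W with x in its context, D(W[V/x]) ≤ max{D(W), D(V)}. -/

import Mathlib

/-!
Substituting a closed value `U` creates no new occurrences of any variable: `U` is invariant under
lifting and contributes no free variable, so every binder of `P` binds exactly as many occurrences
in `P[U/x]` as it does in `P` (`foP_substP`). The binders of `P[U/x]` are those of `P` together
with those of the inserted copies of `U`, and the duplicability factor is the maximum of 1 and the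
occurrence counts over all binders, so it is at most `max (D P) (D U)` (`dP_substP`).

Well-formation enters only through the closedness of `U`: a term that is well formed in `Γ` has all
its free indices below `Γ.length` (`foV_eq_zero`).
-/

/-! Syntax of LHOπ / SHOπ processes and values (variables in de Bruijn style,
channels as names). -/

mutual
inductive Val : Type
  | star : Val
  | var : ℕ → Val
  | lam : Proc → Val
  | blam : Proc → Val
  | bang : Val → Val
inductive Proc : Type
  | nil : Proc
  | par : Proc → Proc → Proc
  | inp : ℕ → Proc → Proc
  | binp : ℕ → Proc → Proc
  | out : ℕ → Val → Proc → Proc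
  | nu : ℕ → Proc → Proc
  | app : Val → Val → Proc
end

/-! Lifting and capture-avoiding substitution. -/

mutual
def liftV (c : ℕ) : Val → Val
  | .star => .star
  | .var x => if x < c then .var x else .var (x + 1)
  | .lam P => .lam (liftP (c + 1) P)
  | .blam P => .blam (liftP (c + 1) P)
  | .bang V => .bang (liftV c V)
def liftP (c : ℕ) : Proc → Proc
  | .nil => .nil
  | .par P Q => .par (liftP c P) (liftP c Q)
  | .inp a P => .inp a (liftP (c + 1) P)
  | .binp a P => .binp a (liftP (c + 1) P)
  | .out a V P => .out a (liftV c V) (liftP c P)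
  | .nu a P => .nu a (liftP c P)
  | .app V W => .app (liftV c V) (liftV c W)
end

mutual
def substV (U : Val) (k : ℕ) : Val → Val
  | .star => .star
  | .var x => if x = k then U else if x < k then .var x else .var (x - 1)
  | .lam P => .lam (substP (liftV 0 U) (k + 1) P)
  | .blam P => .blam (substP (liftV 0 U) (k + 1) P)
  | .bang V => .bang (substV U k V)
def substP (U : Val) (k : ℕ) : Proc → Proc
  | .nil => .nil
  | .par P Q => .par (substP U k P) (substP U k Q)
  | .inp a P => .inp a (substP (liftV 0 U) (k + 1) P)
  | .binp a P => .binp a (substP (liftV 0 U) (k + 1) P)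
  | .out a V P => .out a (substV U k V) (substP U k P)
  | .nu a P => .nu a (substP U k P)
  | .app V W => .app (substV U k V) (substV U k W)
end

/-! Free channels and channel renaming (for α-conversion of restrictions). -/

mutual
def fcV : Val → Finset ℕ
  | .star => ∅
  | .var _ => ∅
  | .lam P => fcP P
  | .blam P => fcP P
  | .bang V => fcV V
def fcP : Proc → Finset ℕ
  | .nil => ∅
  | .par P Q => fcP P ∪ fcP Q
  | .inp a P => insert a (fcP P)
  | .binp a P => insert a (fcP P)
  | .out a V P => insert a (fcV V ∪ fcP P)
  | .nu a P => fcP P \ {a}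
  | .app V W => fcV V ∪ fcV W
end

mutual
def chV (a b : ℕ) : Val → Val
  | .star => .star
  | .var x => .var x
  | .lam P => .lam (chP a b P)
  | .blam P => .blam (chP a b P)
  | .bang V => .bang (chV a b V)
def chP (a b : ℕ) : Proc → Proc
  | .nil => .nil
  | .par P Q => .par (chP a b P) (chP a b Q)
  | .inp c P => .inp (if c = a then b else c) (chP a b P)
  | .binp c P => .binp (if c = a then b else c) (chP a b P)
  | .out c V P => .out (if c = a then b else c) (chV a b V) (chP a b P)
  | .nu c P => if c = a then .nu c P else .nu c (chP a b P)
  | .app V W => .app (chV a b V) (chV a b W)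
end

/-! Structural congruence: the smallest congruence containing α-equivalence
(for channel restrictions; α-equivalence of variables is syntactic identity in
de Bruijn style), associativity and commutativity of parallel composition,
exchange of restrictions, and scope extrusion.  No garbage-collection laws. -/

mutual
inductive SCV : Val → Val → Prop
  | refl (V) : SCV V V
  | symm : SCV V W → SCV W V
  | trans : SCV U V → SCV V W → SCV U W
  | lam : SCP P Q → SCV (.lam P) (.lam Q)
  | blam : SCP P Q → SCV (.blam P) (.blam Q)
  | bang : SCV V W → SCV (.bang V) (.bang W)
inductive SCP : Proc → Proc → Prop
  | refl (P) : SCP P P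
  | symm : SCP P Q → SCP Q P
  | trans : SCP P Q → SCP Q R → SCP P R
  | par : SCP P P' → SCP Q Q' → SCP (.par P Q) (.par P' Q')
  | inp : SCP P Q → SCP (.inp a P) (.inp a Q)
  | binp : SCP P Q → SCP (.binp a P) (.binp a Q)
  | out : SCV V W → SCP P Q → SCP (.out a V P) (.out a W Q)
  | nu : SCP P Q → SCP (.nu a P) (.nu a Q)
  | app : SCV V V' → SCV W W' → SCP (.app V W) (.app V' W')
  | assoc : SCP (.par P (.par Q R)) (.par (.par P Q) R)
  | comm : SCP (.par P Q) (.par Q P)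
  | nuswap : SCP (.nu a (.nu b P)) (.nu b (.nu a P))
  | extrude : a ∉ fcP Q → SCP (.nu a (.par P Q)) (.par (.nu a P) Q)
  | alpha : b ∉ fcP P → SCP (.nu a P) (.nu b (chP a b P))
end

/-! Reduction. -/

inductive Red : Proc → Proc → Prop
  | comm : Red (.par (.out a V P) (.inp a Q)) (.par P (substP V 0 Q))
  | bcomm : Red (.par (.out a (.bang V) P) (.binp a Q)) (.par P (substP V 0 Q))
  | beta : Red (.app (.lam P) V) (substP V 0 P)
  | bbeta : Red (.app (.blam P) (.bang V)) (substP V 0 P)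
  | parL : Red P Q → Red (.par P R) (.par Q R)
  | res : Red P Q → Red (.nu a P) (.nu a Q)
  | struct : SCP P P' → Red P' Q' → SCP Q' Q → Red P Q

/-- `m`-step reduction. -/
inductive RedN : ℕ → Proc → Proc → Prop
  | zero : RedN 0 P P
  | succ : Red P Q → RedN n Q R → RedN (n + 1) P R

/-! SHOπ well-formation.  A context entry is `none` (absent) or a marker:
linear `x`, nonlinear `!x`, or nonlinear `§x`. -/

inductive SMark : Type
  | lin : SMark
  | bang : SMark
  | para : SMark
deriving DecidableEq

abbrev Ctx := List (Option SMark)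

/-- Contexts made only of §-marked (or absent) variables: these admit
weakening. -/
def ParaOnly (Γ : Ctx) : Prop := ∀ e ∈ Γ, e = none ∨ e = some .para

/-- Splitting one context entry between the two premises of a binary rule:
linear and !-variables go to exactly one premise, §-variables may be shared
(implicit contraction). -/
inductive SplitE : Option SMark → Option SMark → Option SMark → Prop
  | none : SplitE none none none
  | linL : SplitE (some .lin) (some .lin) none
  | linR : SplitE (some .lin) none (some .lin)
  | bangL : SplitE (some .bang) (some .bang) none
  | bangR : SplitE (some .bang) none (some .bang)
  | paraL : SplitE (some .para) (some .para) none
  | paraR : SplitE (some .para) none (some .para)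
  | paraB : SplitE (some .para) (some .para) (some .para)

inductive Split : Ctx → Ctx → Ctx → Prop
  | nil : Split [] [] []
  | cons : SplitE e e₁ e₂ → Split Γ Γ₁ Γ₂ → Split (e :: Γ) (e₁ :: Γ₁) (e₂ :: Γ₂)

/-- Entry-wise relation between the context of `V` and the context of `!V`:
linear variables become !-marked ones, and weakening by §-variables is
allowed.  §- and !-variables may not appear inside a !-box. -/
inductive BangE : Option SMark → Option SMark → Prop
  | lin : BangE (some .lin) (some .bang)
  | none : BangE none none
  | para : BangE none (some .para)

inductive BangCtx : Ctx → Ctx → Prop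
  | nil : BangCtx [] []
  | cons : BangE e e' → BangCtx Γ Γ' → BangCtx (e :: Γ) (e' :: Γ')

mutual
inductive WfV : Ctx → Val → Prop
  | star : ParaOnly Γ → WfV Γ .star
  | varLin : ParaOnly Γ → WfV (some .lin :: Γ) (.var 0)
  | varPara : ParaOnly Γ → WfV (some .para :: Γ) (.var 0)
  | varThere : (e = none ∨ e = some SMark.para) → WfV Γ (.var x) →
      WfV (e :: Γ) (.var (x + 1))
  | lam : WfP (some .lin :: Γ) P → WfV Γ (.lam P)
  | blamBang : WfP (some .bang :: Γ) P → WfV Γ (.blam P)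
  | blamPara : WfP (some .para :: Γ) P → WfV Γ (.blam P)
  | bang : BangCtx Γ Δ → WfV Γ V → WfV Δ (.bang V)
inductive WfP : Ctx → Proc → Prop
  | nil : ParaOnly Γ → WfP Γ .nil
  | par : Split Γ Γ₁ Γ₂ → WfP Γ₁ P → WfP Γ₂ Q → WfP Γ (.par P Q)
  | inp : WfP (some .lin :: Γ) P → WfP Γ (.inp a P)
  | binpBang : WfP (some .bang :: Γ) P → WfP Γ (.binp a P)
  | binpPara : WfP (some .para :: Γ) P → WfP Γ (.binp a P)
  | out : Split Γ Γ₁ Γ₂ → WfV Γ₁ V → WfP Γ₂ P → WfP Γ (.out a V P)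
  | nu : WfP Γ P → WfP Γ (.nu a P)
  | app : Split Γ Γ₁ Γ₂ → WfV Γ₁ V → WfV Γ₂ W → WfP Γ (.app V W)
end

/-! Measures: size, box depth, free occurrences, duplicability factor,
parametrized weight, weight. -/

mutual
def sizeV : Val → ℕ
  | .star => 1
  | .var _ => 1
  | .lam P => sizeP P + 1
  | .blam P => sizeP P + 1
  | .bang V => sizeV V + 1
def sizeP : Proc → ℕ
  | .nil => 1
  | .par P Q => sizeP P + sizeP Q + 1
  | .inp _ P => sizeP P + 1
  | .binp _ P => sizeP P + 1
  | .out _ V P => sizeV V + sizeP P + 1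
  | .nu _ P => sizeP P + 1
  | .app V W => sizeV V + sizeV W + 1
end

mutual
def bdV : Val → ℕ
  | .star => 0
  | .var _ => 0
  | .lam P => bdP P
  | .blam P => bdP P
  | .bang V => bdV V + 1
def bdP : Proc → ℕ
  | .nil => 0
  | .par P Q => max (bdP P) (bdP Q)
  | .inp _ P => bdP P
  | .binp _ P => bdP P
  | .out _ V P => max (bdV V) (bdP P)
  | .nu _ P => bdP P
  | .app V W => max (bdV V) (bdV W)
end

-- Number of free occurrences of the variable (de Bruijn index) `k`.
mutual
def foV (k : ℕ) : Val → ℕ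
  | .star => 0
  | .var x => if x = k then 1 else 0
  | .lam P => foP (k + 1) P
  | .blam P => foP (k + 1) P
  | .bang V => foV k V
def foP (k : ℕ) : Proc → ℕ
  | .nil => 0
  | .par P Q => foP k P + foP k Q
  | .inp _ P => foP (k + 1) P
  | .binp _ P => foP (k + 1) P
  | .out _ V P => foV k V + foP k P
  | .nu _ P => foP k P
  | .app V W => foV k V + foV k W
end

-- Duplicability factor.
mutual
def dV : Val → ℕ
  | .star => 1
  | .var _ => 1
  | .lam P => max (dP P) (foP 0 P)
  | .blam P => max (dP P) (foP 0 P)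
  | .bang V => dV V
def dP : Proc → ℕ
  | .nil => 1
  | .par P Q => max (dP P) (dP Q)
  | .inp _ P => max (dP P) (foP 0 P)
  | .binp _ P => max (dP P) (foP 0 P)
  | .out _ V P => max (dV V) (dP P)
  | .nu _ P => dP P
  | .app V W => max (dV V) (dV W)
end

-- `n`-parametrized weight.
mutual
def wV (n : ℕ) : Val → ℕ
  | .star => 1
  | .var _ => 1
  | .lam P => wP n P
  | .blam P => wP n P
  | .bang V => n * wV n V + 1
def wP (n : ℕ) : Proc → ℕ
  | .nil => 1
  | .par P Q => wP n P + wP n Q + 1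
  | .inp _ P => wP n P + 1
  | .binp _ P => wP n P + 1
  | .out _ V P => wV n V + wP n P
  | .nu _ P => wP n P
  | .app V W => wV n V + wV n W + 1
end

/-- The weight of a process. -/
def weightP (P : Proc) : ℕ := wP (dP P) P
/-- The weight of a value. -/
def weightV (V : Val) : ℕ := wV (dV V) V

/-! ### Closedness and well-formation -/

theorem Split.length_eq {Γ Γ₁ Γ₂ : Ctx} (h : Split Γ Γ₁ Γ₂) :
    Γ₁.length = Γ.length ∧ Γ₂.length = Γ.length := by
  induction h with
  | nil => simp
  | cons _ _ ih => simpa using ih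

theorem BangCtx.length_eq {Γ Δ : Ctx} (h : BangCtx Γ Δ) : Γ.length = Δ.length := by
  induction h with
  | nil => rfl
  | cons _ _ ih => simpa using ih

theorem WfV.var_lt {x : ℕ} : ∀ {Γ : Ctx}, WfV Γ (.var x) → x < Γ.length := by
  induction x with
  | zero => intro Γ h; cases h <;> simp
  | succ x ih =>
    intro Γ h
    cases h with
    | varThere _ h => simpa using ih h

mutual
/-- The free indices of a value well formed in `Γ` lie below `Γ.length`. -/
theorem foV_eq_zero : ∀ (V : Val) {Γ : Ctx}, WfV Γ V → ∀ k, Γ.length ≤ k → foV k V = 0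
  | .star, _, _, _, _ => rfl
  | .var x, _, h, k, hk => by
    have := h.var_lt
    simp only [foV]
    rw [if_neg (by omega)]
  | .lam P, _, h, k, hk => by
    cases h with
    | lam h => exact foP_eq_zero P h (k + 1) (by simpa using hk)
  | .blam P, _, h, k, hk => by
    cases h with
    | blamBang h => exact foP_eq_zero P h (k + 1) (by simpa using hk)
    | blamPara h => exact foP_eq_zero P h (k + 1) (by simpa using hk)
  | .bang V, _, h, k, hk => by
    cases h with
    | bang hb h => exact foV_eq_zero V h k (by have := hb.length_eq; omega)
/-- The free indices of a process well formed in `Γ` lie below `Γ.length`. -/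
theorem foP_eq_zero : ∀ (P : Proc) {Γ : Ctx}, WfP Γ P → ∀ k, Γ.length ≤ k → foP k P = 0
  | .nil, _, _, _, _ => rfl
  | .par P Q, _, h, k, hk => by
    cases h with
    | par hs h₁ h₂ =>
      have := hs.length_eq
      simp only [foP]
      rw [foP_eq_zero P h₁ k (by omega), foP_eq_zero Q h₂ k (by omega)]
  | .inp a P, _, h, k, hk => by
    cases h with
    | inp h => exact foP_eq_zero P h (k + 1) (by simpa using hk)
  | .binp a P, _, h, k, hk => by
    cases h with
    | binpBang h => exact foP_eq_zero P h (k + 1) (by simpa using hk)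
    | binpPara h => exact foP_eq_zero P h (k + 1) (by simpa using hk)
  | .out a V P, _, h, k, hk => by
    cases h with
    | out hs h₁ h₂ =>
      have := hs.length_eq
      simp only [foP]
      rw [foV_eq_zero V h₁ k (by omega), foP_eq_zero P h₂ k (by omega)]
  | .nu a P, _, h, k, hk => by
    cases h with
    | nu h => exact foP_eq_zero P h k hk
  | .app V W, _, h, k, hk => by
    cases h with
    | app hs h₁ h₂ =>
      have := hs.length_eq
      simp only [foP]
      rw [foV_eq_zero V h₁ k (by omega), foV_eq_zero W h₂ k (by omega)]
end

/-- Vanishing of all indices `≥ c` of a binder means vanishing of all indices `≥ c + 1` of its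
body. -/
theorem shiftP (P : Proc) (c : ℕ) (h : ∀ k, c ≤ k → foP (k + 1) P = 0) (k : ℕ) (hk : c + 1 ≤ k) :
    foP k P = 0 := by
  obtain ⟨k, rfl⟩ := Nat.exists_eq_succ_of_ne_zero (show k ≠ 0 by omega)
  exact h k (by omega)

mutual
/-- Lifting above all free indices is the identity. -/
theorem liftV_eq_self : ∀ (V : Val) (c : ℕ), (∀ k, c ≤ k → foV k V = 0) → liftV c V = V
  | .star, _, _ => rfl
  | .var x, c, h => by
    have hx : x < c := by
      by_contra hx
      simpa [foV] using h x (by omega)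
    simp [liftV, hx]
  | .lam P, c, h => congrArg Val.lam (liftP_eq_self P (c + 1) (shiftP P c h))
  | .blam P, c, h => congrArg Val.blam (liftP_eq_self P (c + 1) (shiftP P c h))
  | .bang V, c, h => congrArg Val.bang (liftV_eq_self V c h)
theorem liftP_eq_self : ∀ (P : Proc) (c : ℕ), (∀ k, c ≤ k → foP k P = 0) → liftP c P = P
  | .nil, _, _ => rfl
  | .par P Q, c, h => by
    simp only [foP, Nat.add_eq_zero_iff] at h
    simp only [liftP]
    rw [liftP_eq_self P c fun k hk => (h k hk).1, liftP_eq_self Q c fun k hk => (h k hk).2]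
  | .inp a P, c, h => congrArg (Proc.inp a) (liftP_eq_self P (c + 1) (shiftP P c h))
  | .binp a P, c, h => congrArg (Proc.binp a) (liftP_eq_self P (c + 1) (shiftP P c h))
  | .out a V P, c, h => by
    simp only [foP, Nat.add_eq_zero_iff] at h
    simp only [liftP]
    rw [liftV_eq_self V c fun k hk => (h k hk).1, liftP_eq_self P c fun k hk => (h k hk).2]
  | .nu a P, c, h => congrArg (Proc.nu a) (liftP_eq_self P c h)
  | .app V W, c, h => by
    simp only [foP, Nat.add_eq_zero_iff] at h
    simp only [liftP]
    rw [liftV_eq_self V c fun k hk => (h k hk).1, liftV_eq_self W c fun k hk => (h k hk).2]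
end

/-! ### Substitution of a closed value -/

mutual
/-- Substituting a closed value for index `k` preserves the number of occurrences of each smaller
index, in particular of those bound inside the term. -/
theorem foV_substV {U : Val} (hl : liftV 0 U = U) (hf : ∀ i, foV i U = 0) :
    ∀ (V : Val) (j k : ℕ), j < k → foV j (substV U k V) = foV j V
  | .star, _, _, _ => rfl
  | .var x, j, k, hjk => by
    simp only [substV]
    split_ifs with h₁ h₂
    · rw [hf]
      simp only [foV]
      rw [if_neg (by omega)]
    · rfl
    · simp only [foV]
      rw [if_neg (by omega), if_neg (by omega)]
  | .lam P, j, k, hjk => by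
    simp only [substV, foV, hl]
    exact foP_substP hl hf P (j + 1) (k + 1) (by omega)
  | .blam P, j, k, hjk => by
    simp only [substV, foV, hl]
    exact foP_substP hl hf P (j + 1) (k + 1) (by omega)
  | .bang V, j, k, hjk => by
    simp only [substV, foV]
    exact foV_substV hl hf V j k hjk
theorem foP_substP {U : Val} (hl : liftV 0 U = U) (hf : ∀ i, foV i U = 0) :
    ∀ (P : Proc) (j k : ℕ), j < k → foP j (substP U k P) = foP j P
  | .nil, _, _, _ => rfl
  | .par P Q, j, k, hjk => by
    simp only [substP, foP]
    rw [foP_substP hl hf P j k hjk, foP_substP hl hf Q j k hjk]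
  | .inp a P, j, k, hjk => by
    simp only [substP, foP, hl]
    exact foP_substP hl hf P (j + 1) (k + 1) (by omega)
  | .binp a P, j, k, hjk => by
    simp only [substP, foP, hl]
    exact foP_substP hl hf P (j + 1) (k + 1) (by omega)
  | .out a V P, j, k, hjk => by
    simp only [substP, foP]
    rw [foV_substV hl hf V j k hjk, foP_substP hl hf P j k hjk]
  | .nu a P, j, k, hjk => by
    simp only [substP, foP]
    exact foP_substP hl hf P j k hjk
  | .app V W, j, k, hjk => by
    simp only [substP, foP]
    rw [foV_substV hl hf V j k hjk, foV_substV hl hf W j k hjk]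
end

mutual
theorem dV_substV {U : Val} (hl : liftV 0 U = U) (hf : ∀ i, foV i U = 0) :
    ∀ (V : Val) (k : ℕ), dV (substV U k V) ≤ max (dV V) (dV U)
  | .star, _ => by simp [substV]
  | .var x, k => by
    simp only [substV]
    split_ifs <;> simp [dV]
  | .lam P, k => by
    have := dP_substP hl hf P (k + 1)
    simp only [substV, dV, hl, foP_substP hl hf P 0 (k + 1) k.succ_pos]
    omega
  | .blam P, k => by
    have := dP_substP hl hf P (k + 1)
    simp only [substV, dV, hl, foP_substP hl hf P 0 (k + 1) k.succ_pos]
    omega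
  | .bang V, k => by
    simp only [substV, dV]
    exact dV_substV hl hf V k
theorem dP_substP {U : Val} (hl : liftV 0 U = U) (hf : ∀ i, foV i U = 0) :
    ∀ (P : Proc) (k : ℕ), dP (substP U k P) ≤ max (dP P) (dV U)
  | .nil, _ => by simp [substP]
  | .par P Q, k => by
    have h₁ := dP_substP hl hf P k
    have h₂ := dP_substP hl hf Q k
    simp only [substP, dP]
    omega
  | .inp a P, k => by
    have := dP_substP hl hf P (k + 1)
    simp only [substP, dP, hl, foP_substP hl hf P 0 (k + 1) k.succ_pos]
    omega
  | .binp a P, k => by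
    have := dP_substP hl hf P (k + 1)
    simp only [substP, dP, hl, foP_substP hl hf P 0 (k + 1) k.succ_pos]
    omega
  | .out a V P, k => by
    have h₁ := dV_substV hl hf V k
    have h₂ := dP_substP hl hf P k
    simp only [substP, dP]
    omega
  | .nu a P, k => by
    simp only [substP, dP]
    exact dP_substP hl hf P k
  | .app V W, k => by
    have h₁ := dV_substV hl hf V k
    have h₂ := dV_substV hl hf W k
    simp only [substP, dP]
    omega
end

/-- The duplicability factor of a substitution is bounded:  if `P` (resp. `W`)
is well formed in a context declaring the variable `x` (here: de Bruijn index
`0`) with any of the three markers, and `V` is a well-formed closed value,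
then `D(P[V/x]) ≤ max (D P) (D V)` (and similarly for values). -/
theorem dup_factor_subst :
    (∀ (Γ : Ctx) (m : SMark) (P : Proc) (V : Val),
        WfP (some m :: Γ) P → WfV [] V →
        dP (substP V 0 P) ≤ max (dP P) (dV V)) ∧
    (∀ (Γ : Ctx) (m : SMark) (W V : Val),
        WfV (some m :: Γ) W → WfV [] V →
        dV (substV V 0 W) ≤ max (dV W) (dV V)) := by
  have closed (V : Val) (hV : WfV [] V) : liftV 0 V = V ∧ ∀ i, foV i V = 0 :=
    have hf i : foV i V = 0 := foV_eq_zero V hV i i.zero_le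
    ⟨liftV_eq_self V 0 fun i _ => hf i, hf⟩
  exact ⟨fun _ _ P V _ hV => dP_substP (closed V hV).1 (closed V hV).2 P 0,
    fun _ _ W V _ hV => dV_substV (closed V hV).1 (closed V hV).2 W 0⟩
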